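/- For every complex number q with 0 < |q| < 1 and every nonzero complex number z, one has ∑_{i,j,k,l ≥ 0} z^{i−j} q^{i²+j²+k²+l²−il−jl−kl} / ((q²;q²)_i (q²;q²)_j (q²;q²)_k (q²;q²)_l) = J_2³ · (−q/z, −qz; q²)_∞ · (−q²z, −q²/z; q⁴)_∞ / (J_1² J_4) + 2q · J_4³ · (−1/z, −q²z; q²)_∞ · (−z, −q⁴/z; q⁴)_∞ / J_2³. (Taking z = q^b recovers the identity for the Nahm sum F(q^b, q^{−b}, 1, 1; q²) for any rational b.) -/

import Mathlib

open scoped BigOperators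

/-- The infinite q-Pochhammer symbol `(a; q)_∞ = ∏_{k=0}^∞ (1 - a q^k)`. -/
noncomputable def qPochInf (a q : ℂ) : ℂ := ∏' n : ℕ, (1 - a * q ^ n)

/-- The finite q-Pochhammer symbol `(a; q)_n = ∏_{k=0}^{n-1} (1 - a q^k)`. -/
noncomputable def qPoch (a q : ℂ) (n : ℕ) : ℂ :=
  Finset.prod (Finset.range n) (fun k => 1 - a * q ^ k)

/-- `J_m = (q^m; q^m)_∞`. -/
noncomputable def J (q : ℂ) (m : ℕ) : ℂ := qPochInf (q ^ m) (q ^ m)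

/-- `J_{a,m} = (q^a; q^m)_∞ (q^{m-a}; q^m)_∞ (q^m; q^m)_∞`. -/
noncomputable def Jam (q : ℂ) (a m : ℕ) : ℂ :=
  qPochInf (q ^ a) (q ^ m) * qPochInf (q ^ (m - a)) (q ^ m) * qPochInf (q ^ m) (q ^ m)

open Filter Topology

lemma qp_summ (a q : ℂ) (hq : ‖q‖ < 1) : Summable (fun n : ℕ => ‖-(a * q ^ n)‖) := by
  simp only [norm_neg, norm_mul, norm_pow]
  exact (summable_geometric_of_lt_one (norm_nonneg _) hq).mul_left _

lemma qp_mult (a q : ℂ) (hq : ‖q‖ < 1) : Multipliable (fun n : ℕ => 1 - a * q ^ n) := by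
  have := multipliable_one_add_of_summable (qp_summ a q hq)
  simpa [sub_eq_add_neg] using this

lemma qp_tendsto (a q : ℂ) (hq : ‖q‖ < 1) :
    Tendsto (fun n => qPoch a q n) atTop (𝓝 (qPochInf a q)) :=
  (qp_mult a q hq).hasProd.tendsto_prod_nat

lemma qp_ne (a q : ℂ) (hq : ‖q‖ < 1) (h : ∀ n : ℕ, 1 - a * q ^ n ≠ 0) : qPochInf a q ≠ 0 := by
  have := tprod_one_add_ne_zero_of_summable (f := fun n : ℕ => -(a * q ^ n))
    (by simpa [sub_eq_add_neg] using h) (qp_summ a q hq)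
  simpa [qPochInf, sub_eq_add_neg] using this

lemma one_sub_ne (x : ℂ) (h : ‖x‖ < 1) : 1 - x ≠ 0 := by
  intro h'
  have : x = 1 := (sub_eq_zero.mp h').symm
  rw [this] at h; simp at h

lemma qp_ne' (a q : ℂ) (hq : ‖q‖ < 1) (ha : ‖a‖ < 1) : qPochInf a q ≠ 0 := by
  apply qp_ne a q hq
  intro n
  apply one_sub_ne
  rw [norm_mul, norm_pow]
  calc ‖a‖ * ‖q‖ ^ n ≤ ‖a‖ * 1 := by
        gcongr; exact pow_le_one₀ (norm_nonneg _) hq.le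
    _ < 1 := by simpa using ha

lemma qp_succ (a q : ℂ) (hq : ‖q‖ < 1) : qPochInf a q = (1 - a) * qPochInf (a * q) q := by
  unfold qPochInf
  rw [tprod_eq_zero_mul' (f := fun n : ℕ => 1 - a * q ^ n)]
  · simp [pow_succ', mul_assoc]
  · simpa [pow_succ', mul_assoc] using qp_mult (a * q) q hq

lemma sq_lt (q : ℂ) (hq : ‖q‖ < 1) : ‖q ^ 2‖ < 1 := by
  rw [norm_pow]; exact pow_lt_one₀ (norm_nonneg _) hq (by norm_num)

lemma qp_dup (a q : ℂ) (hq : ‖q‖ < 1) :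
    qPochInf a q = qPochInf a (q ^ 2) * qPochInf (a * q) (q ^ 2) := by
  unfold qPochInf
  rw [← tprod_even_mul_odd (f := fun n : ℕ => 1 - a * q ^ n)]
  · simp only [pow_mul, pow_succ, mul_assoc]
    congr 1
    congr 1; ext n; ring
  · simpa [pow_mul] using qp_mult a (q ^ 2) (sq_lt q hq)
  · have := qp_mult (a * q) (q ^ 2) (sq_lt q hq)
    convert this using 2 with n
    ring

lemma qp_neg (a q : ℂ) (hq : ‖q‖ < 1) :
    qPochInf a q * qPochInf (-a) q = qPochInf (a ^ 2) (q ^ 2) := by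
  unfold qPochInf
  rw [← (qp_mult a q hq).tprod_mul (qp_mult (-a) q hq)]
  congr 1; ext n; ring

noncomputable def Bd (M r : ℝ) (n : ℕ) : ℝ := ∏ j ∈ Finset.range n, M * r ^ j

lemma Bd_summ (M r : ℝ) (hM : 0 ≤ M) (hr : 0 ≤ r) (hr1 : r < 1) : Summable (Bd M r) := by
  have ht : Tendsto (fun n : ℕ => M * r ^ n) atTop (𝓝 (M * 0)) :=
    (tendsto_pow_atTop_nhds_zero_of_lt_one hr hr1).const_mul M
  rw [mul_zero] at ht
  apply summable_of_ratio_norm_eventually_le (r := 1/2) (by norm_num)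
  filter_upwards [ht.eventually (gt_mem_nhds (show (0:ℝ) < 1/2 by norm_num))] with n hn
  unfold Bd
  rw [Finset.prod_range_succ, mul_comm, norm_mul]
  gcongr
  rw [Real.norm_of_nonneg (by positivity)]
  exact hn.le

lemma prod_bd (ρ : ℕ → ℂ) (M r : ℝ) (h : ∀ j, ‖ρ j‖ ≤ M * r ^ j) (n : ℕ) :
    ‖∏ j ∈ Finset.range n, ρ j‖ ≤ Bd M r n := by
  rw [norm_prod]
  exact Finset.prod_le_prod (fun _ _ => norm_nonneg _) (fun j _ => h j)

lemma tele (f R : ℕ → ℂ) (hf : Summable f) (h : ∀ n, f n = R (n + 1) - R n) (h0 : R 0 = 0)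
    (hR : Tendsto R atTop (𝓝 0)) : ∑' n, f n = 0 := by
  have h1 := hf.hasSum.tendsto_sum_nat
  have h2 : (fun n => ∑ i ∈ Finset.range n, f i) = R := by
    ext n
    simp only [h, Finset.sum_range_sub, h0, sub_zero]
  rw [h2] at h1
  exact tendsto_nhds_unique h1 hR

lemma iter (T : ℕ → ℕ → ℂ) (T0 : ℕ → ℂ) (B : ℕ → ℝ) (α : ℕ → ℂ) (A : ℂ) (hB : Summable B)
    (hT : ∀ k n, ‖T k n‖ ≤ B n) (hl : ∀ n, Tendsto (fun k => T k n) atTop (𝓝 (T0 n)))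
    (hrec : ∀ k, ∑' n, T k n = α k * ∑' n, T (k + 1) n)
    (hα : Tendsto (fun K => ∏ k ∈ Finset.range K, α k) atTop (𝓝 A)) :
    ∑' n, T 0 n = A * ∑' n, T0 n := by
  have h1 : ∀ K, ∑' n, T 0 n = (∏ k ∈ Finset.range K, α k) * ∑' n, T K n := by
    intro K
    induction K with
    | zero => simp
    | succ K ih => rw [ih, hrec K, Finset.prod_range_succ, mul_assoc]
  have h2 : Tendsto (fun K => ∑' n, T K n) atTop (𝓝 (∑' n, T0 n)) :=
    tendsto_tsum_of_dominated_convergence hB hl (Eventually.of_forall hT)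
  have h3 := hα.mul h2
  simp only [← h1] at h3
  exact tendsto_nhds_unique tendsto_const_nhds h3

lemma inv_bd (x : ℂ) (r : ℝ) (hr : r < 1) (h : ‖x‖ ≤ r) : ‖(1 - x)⁻¹‖ ≤ (1 - r)⁻¹ := by
  rw [norm_inv]
  have : 1 - r ≤ ‖1 - x‖ := by
    have := norm_sub_norm_le 1 x
    simp at this; linarith
  exact inv_anti₀ (by linarith) this

lemma pow_bd (q : ℂ) (hq : ‖q‖ < 1) (n : ℕ) : ‖q ^ (n + 1)‖ ≤ ‖q‖ := by
  rw [norm_pow, pow_succ]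
  exact mul_le_of_le_one_left (norm_nonneg _) (pow_le_one₀ (norm_nonneg _) hq.le)

lemma pow_bd1 (q : ℂ) (hq : ‖q‖ < 1) (n : ℕ) : ‖q ^ n‖ ≤ 1 := by
  rw [norm_pow]
  exact pow_le_one₀ (norm_nonneg _) hq.le

lemma add_bd (a q : ℂ) (hq : ‖q‖ < 1) (n : ℕ) : ‖1 - a * q ^ n‖ ≤ 1 + ‖a‖ := by
  calc ‖1 - a * q ^ n‖ ≤ ‖(1:ℂ)‖ + ‖a * q ^ n‖ := norm_sub_le _ _
    _ ≤ 1 + ‖a‖ * 1 := by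
      rw [norm_one, norm_mul]; gcongr; exact pow_bd1 q hq n
    _ = _ := by ring

/-- Euler term -/
noncomputable def TE (x q : ℂ) (n : ℕ) : ℂ :=
  ∏ j ∈ Finset.range n, (x * q ^ j * (1 - q ^ (j + 1))⁻¹)

lemma TE_bd (x q : ℂ) (M : ℝ) (hx : ‖x‖ ≤ M) (hq : ‖q‖ < 1) (n : ℕ) :
    ‖TE x q n‖ ≤ Bd (M * (1 - ‖q‖)⁻¹) ‖q‖ n := by
  apply prod_bd
  intro j
  rw [norm_mul, norm_mul, norm_pow]
  have := inv_bd (q ^ (j+1)) ‖q‖ hq (pow_bd q hq j)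
  calc _ ≤ M * ‖q‖ ^ j * (1 - ‖q‖)⁻¹ := by
        have := norm_nonneg x
        have : 0 ≤ M := by linarith
        gcongr
    _ = _ := by ring

lemma qn_ne (q : ℂ) (hq : ‖q‖ < 1) (n : ℕ) : 1 - q ^ (n + 1) ≠ 0 :=
  one_sub_ne _ ((pow_bd q hq n).trans_lt hq)

lemma TE_summ (x q : ℂ) (hq : ‖q‖ < 1) : Summable (TE x q) := by
  have h1 : 0 < 1 - ‖q‖ := by linarith
  exact Summable.of_norm_bounded (Bd_summ _ _ (by positivity) (norm_nonneg _) hq)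
    (TE_bd x q ‖x‖ le_rfl hq)

lemma TE_scale (x q : ℂ) (n : ℕ) (y : ℂ) : TE (x * y) q n = y ^ n * TE x q n := by
  unfold TE
  rw [← Finset.card_range n, ← Finset.prod_const, Finset.card_range, ← Finset.prod_mul_distrib]
  congr 1; ext j; ring

lemma euler_rec (x q : ℂ) (hq : ‖q‖ < 1) :
    ∑' n, TE x q n = (1 + x) * ∑' n, TE (x * q) q n := by
  have s1 := TE_summ x q hq
  have s2 := (TE_summ (x * q) q hq).mul_left (1 + x)
  rw [← sub_eq_zero, ← tsum_mul_left, ← s1.tsum_sub s2]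
  apply tele _ (fun n => -((1 - q ^ n) * TE x q n)) (s1.sub s2)
  · intro n
    rw [TE_scale]
    have h := qn_ne q hq n
    have : TE x q (n + 1) = TE x q n * (x * q ^ n * (1 - q ^ (n + 1))⁻¹) := Finset.prod_range_succ _ _
    rw [this]
    field_simp
    ring
  · simp
  · have h1 := tendsto_pow_atTop_nhds_zero_of_norm_lt_one hq
    have h2 := ((tendsto_const_nhds (x := (1:ℂ))).sub h1).mul s1.tendsto_atTop_zero
    simpa using h2.neg

lemma euler (x q : ℂ) (hq : ‖q‖ < 1) : ∑' n, TE x q n = qPochInf (-x) q := by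
  have h1 : 0 < 1 - ‖q‖ := by linarith
  have := iter (fun k n => TE (x * q ^ k) q n) (fun n => TE 0 q n) (Bd (‖x‖ * (1 - ‖q‖)⁻¹) ‖q‖)
    (fun k => 1 + x * q ^ k) (qPochInf (-x) q) (Bd_summ _ _ (by positivity) (norm_nonneg _) hq)
    (fun k n => TE_bd _ _ _ (by
      rw [norm_mul]; exact mul_le_of_le_one_right (norm_nonneg _) (pow_bd1 q hq k)) hq n)
    (fun n => by
      unfold TE
      apply tendsto_finsetProd
      intro j _
      have h1 := ((tendsto_pow_atTop_nhds_zero_of_norm_lt_one hq).const_mul x).mul_const (q ^ j)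
      simpa using h1.mul_const ((1 - q ^ (j + 1))⁻¹))
    (fun k => by
      rw [euler_rec _ _ hq]; simp only [pow_succ, mul_assoc])
    (by
      have := qp_tendsto (-x) q hq
      simpa [qPoch] using this)
  simp only [pow_zero, mul_one] at this
  rw [this, tsum_eq_single 0]
  · simp [TE]
  · intro n hn
    obtain ⟨m, rfl⟩ := Nat.exists_eq_succ_of_ne_zero hn
    simp [TE]

/-- Gauss term -/
noncomputable def TG (a b q : ℂ) (n : ℕ) : ℂ :=
  ∏ j ∈ Finset.range n, ((1 - a * q ^ j) * (1 - b * q ^ j) * q ^ (j + 1) *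
    (1 - q ^ (j + 1))⁻¹ * (1 - a * b * q ^ (2 * j + 1))⁻¹)

noncomputable def UG (a b q : ℂ) (n : ℕ) : ℂ :=
  ∏ j ∈ Finset.range n, ((1 - a * q ^ (j + 1)) * (1 - b * q ^ j) * q ^ (j + 1) *
    (1 - q ^ (j + 1))⁻¹ * (1 - a * b * q ^ (2 * j + 1))⁻¹)

lemma ab_bd (a b q : ℂ) (hab : ‖a * b‖ ≤ 1) (hq : ‖q‖ < 1) (n : ℕ) :
    ‖a * b * q ^ (n + 1)‖ ≤ ‖q‖ := by
  rw [norm_mul]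
  calc _ ≤ 1 * ‖q‖ := by gcongr; exact pow_bd q hq n
    _ = _ := one_mul _

lemma TG_bd (a b q : ℂ) (M : ℝ) (ha : ‖a‖ ≤ M) (hab : ‖a * b‖ ≤ 1) (hq : ‖q‖ < 1) (n : ℕ) :
    ‖TG a b q n‖ ≤ Bd ((1 + M) * (1 + ‖b‖) * ((1 - ‖q‖)⁻¹ * (1 - ‖q‖)⁻¹)) ‖q‖ n := by
  apply prod_bd
  intro j
  have h1 : 0 < 1 - ‖q‖ := by linarith
  have hM : 0 ≤ M := (norm_nonneg a).trans ha
  simp only [norm_mul]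
  have e1 := inv_bd (q ^ (j+1)) ‖q‖ hq (pow_bd q hq j)
  have e2 := inv_bd _ ‖q‖ hq (ab_bd a b q hab hq (2 * j))
  have e3 : ‖q ^ (j + 1)‖ ≤ ‖q‖ ^ j := by
    rw [norm_pow]; exact pow_le_pow_of_le_one (norm_nonneg _) hq.le (by omega)
  have e4 := (add_bd a q hq j).trans (by gcongr : 1 + ‖a‖ ≤ 1 + M)
  have e5 := add_bd b q hq j
  calc _ ≤ (1 + M) * (1 + ‖b‖) * ‖q‖ ^ j * (1 - ‖q‖)⁻¹ * (1 - ‖q‖)⁻¹ := by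
        gcongr
    _ = _ := by ring

lemma UG_bd (a b q : ℂ) (hab : ‖a * b‖ ≤ 1) (hq : ‖q‖ < 1) (n : ℕ) :
    ‖UG a b q n‖ ≤ Bd ((1 + ‖a‖) * (1 + ‖b‖) * ((1 - ‖q‖)⁻¹ * (1 - ‖q‖)⁻¹)) ‖q‖ n := by
  apply prod_bd
  intro j
  have h1 : 0 < 1 - ‖q‖ := by linarith
  simp only [norm_mul]
  have e1 := inv_bd (q ^ (j+1)) ‖q‖ hq (pow_bd q hq j)
  have e2 := inv_bd _ ‖q‖ hq (ab_bd a b q hab hq (2 * j))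
  have e3 : ‖q ^ (j + 1)‖ ≤ ‖q‖ ^ j := by
    rw [norm_pow]; exact pow_le_pow_of_le_one (norm_nonneg _) hq.le (by omega)
  have e4 := add_bd a q hq (j + 1)
  have e5 := add_bd b q hq j
  calc _ ≤ (1 + ‖a‖) * (1 + ‖b‖) * ‖q‖ ^ j * (1 - ‖q‖)⁻¹ * (1 - ‖q‖)⁻¹ := by
        gcongr
    _ = _ := by ring

lemma TG_summ (a b q : ℂ) (hab : ‖a * b‖ ≤ 1) (hq : ‖q‖ < 1) : Summable (TG a b q) := by
  have h1 : 0 < 1 - ‖q‖ := by linarith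
  exact Summable.of_norm_bounded (Bd_summ _ _ (by positivity) (norm_nonneg _) hq)
    (TG_bd a b q _ le_rfl hab hq)

lemma UG_summ (a b q : ℂ) (hab : ‖a * b‖ ≤ 1) (hq : ‖q‖ < 1) : Summable (UG a b q) := by
  have h1 : 0 < 1 - ‖q‖ := by linarith
  exact Summable.of_norm_bounded (Bd_summ _ _ (by positivity) (norm_nonneg _) hq)
    (UG_bd a b q hab hq)

lemma ab_ne (a b q : ℂ) (hab : ‖a * b‖ ≤ 1) (hq : ‖q‖ < 1) (n : ℕ) :
    1 - a * b * q ^ (n + 1) ≠ 0 := one_sub_ne _ ((ab_bd a b q hab hq n).trans_lt hq)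

lemma TU1 (a b q : ℂ) (n : ℕ) : TG a b q n * (1 - a * q ^ n) = (1 - a) * UG a b q n := by
  induction n with
  | zero => simp [TG, UG]
  | succ n ih =>
    have e1 : TG a b q (n + 1) = TG a b q n * _ := Finset.prod_range_succ _ _
    have e2 : UG a b q (n + 1) = UG a b q n * _ := Finset.prod_range_succ _ _
    rw [e1, e2]
    linear_combination ((1 - b * q ^ n) * q ^ (n + 1) * (1 - q ^ (n + 1))⁻¹ *
      (1 - a * b * q ^ (2 * n + 1))⁻¹ * (1 - a * q ^ (n + 1))) * ih

lemma TU2 (a b q : ℂ) (hab : ‖a * b‖ ≤ 1) (hq : ‖q‖ < 1) (n : ℕ) :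
    TG (a * q ^ 2) b q n * (1 - a * q) * (1 - a * b * q ^ (2 * n + 1)) =
      UG a b q n * (1 - a * q ^ (n + 1)) * (1 - a * b * q) := by
  induction n with
  | zero => simp [TG, UG]
  | succ n ih =>
    have e1 : TG (a * q ^ 2) b q (n + 1) = TG (a * q ^ 2) b q n * _ := Finset.prod_range_succ _ _
    have e2 : UG a b q (n + 1) = UG a b q n * _ := Finset.prod_range_succ _ _
    have h1 := ab_ne a b q hab hq (2 * n)
    have h2 := ab_ne a b q hab hq (2 * (n + 1))
    have h3 := qn_ne q hq n
    rw [e1, e2]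
    have e3 : a * q ^ 2 * b * q ^ (2 * n + 1) = a * b * q ^ (2 * (n + 1) + 1) := by ring
    have e4 : a * q ^ 2 * q ^ n = a * q ^ (n + 1 + 1) := by ring
    rw [e3, e4]
    have i1 := inv_mul_cancel₀ h1
    have i2 := inv_mul_cancel₀ h2
    generalize TG (a * q ^ 2) b q n = t at *
    generalize UG a b q n = u at *
    generalize (1 - a * b * q ^ (2 * n + 1))⁻¹ = v1 at *
    generalize (1 - a * b * q ^ (2 * (n + 1) + 1))⁻¹ = v2 at *
    generalize (1 - q ^ (n + 1))⁻¹ = v3 at *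
    linear_combination ((1 - a * q ^ (n + 1 + 1)) * (1 - b * q ^ n) * q ^ (n + 1) * v3) *
      (t * (1 - a * q) * i2 - t * (1 - a * q) * i1 + v1 * ih)

lemma gauss_rec (a b q : ℂ) (hab : ‖a * b‖ ≤ 1) (hab' : ‖a * q ^ 2 * b‖ ≤ 1) (hq : ‖q‖ < 1) :
    ∑' n, TG a b q n = ((1 - a * q) / (1 - a * b * q)) * ∑' n, TG (a * q ^ 2) b q n := by
  have h0 : 1 - a * b * q ≠ 0 := by simpa using ab_ne a b q hab hq 0
  have s1 := (TG_summ a b q hab hq).mul_left (1 - a * b * q)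
  have s2 := (TG_summ (a * q ^ 2) b q hab' hq).mul_left (1 - a * q)
  have su := UG_summ a b q hab hq
  suffices h : (1 - a * b * q) * ∑' n, TG a b q n = (1 - a * q) * ∑' n, TG (a * q ^ 2) b q n by
    rw [div_mul_eq_mul_div, eq_div_iff h0]; linear_combination h
  rw [← sub_eq_zero, ← tsum_mul_left, ← tsum_mul_left, ← s1.tsum_sub s2]
  set R : ℕ → ℂ := fun n => Nat.casesOn n 0 (fun m => a * (1 - a * b * q) * (UG a b q m *
    ((1 - b * q ^ m) * (q ^ (m + 1) * (1 - a * b * q ^ (2 * m + 1))⁻¹)))) with hR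
  apply tele _ R (s1.sub s2)
  · intro n
    cases n with
    | zero =>
      simp only [hR, TG, UG]
      simp
      generalize hD : 1 - a * b * q = D at *
      field_simp
    | succ m =>
      have e1 := TU1 a b q m
      have e2 := TU2 a b q hab hq (m + 1)
      have e3 : TG a b q (m + 1) = TG a b q m * _ := Finset.prod_range_succ _ _
      have e4 : UG a b q (m + 1) = UG a b q m * _ := Finset.prod_range_succ _ _
      have h1 := ab_ne a b q hab hq (2 * m)
      have h2 := ab_ne a b q hab hq (2 * (m + 1))
      have h3 := qn_ne q hq m
      have e5 : (1 - a * q) * TG (a * q ^ 2) b q (m + 1) =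
          UG a b q (m + 1) * (1 - a * q ^ (m + 1 + 1)) * (1 - a * b * q) *
            (1 - a * b * q ^ (2 * (m + 1) + 1))⁻¹ := by
        rw [← div_eq_mul_inv, eq_div_iff h2]; linear_combination e2
      have e6 : TG a b q (m + 1) = (1 - a) * UG a b q m * (1 - b * q ^ m) * q ^ (m + 1) *
          (1 - q ^ (m + 1))⁻¹ * (1 - a * b * q ^ (2 * m + 1))⁻¹ := by
        rw [e3, ← e1]; ring
      simp only [hR]
      rw [e5, e6, e4]
      generalize UG a b q m = u
      have p1 : q ^ (2 * m + 1) = q * (q ^ m) ^ 2 := by ring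
      have p2 : q ^ (2 * (m + 1) + 1) = q ^ 3 * (q ^ m) ^ 2 := by ring
      have p3 : q ^ (m + 1) = q * q ^ m := by ring
      have p4 : q ^ (m + 1 + 1) = q ^ 2 * q ^ m := by ring
      rw [p1] at h1
      rw [p2] at h2
      rw [p3] at h3
      rw [p1, p2, p4, p3]
      clear e1 e2 e3 e4 e5 e6 p1 p2 p3 p4
      generalize q ^ m = Y at *
      generalize hD1 : 1 - a * b * (q * Y ^ 2) = D1 at *
      generalize hD2 : 1 - a * b * (q ^ 3 * Y ^ 2) = D2 at *
      generalize hD3 : 1 - q * Y = D3 at *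
      field_simp
      subst hD1 hD2 hD3
      ring
  · simp [hR]
  · rw [← tendsto_add_atTop_iff_nat 1]
    simp only [hR]
    have hp := tendsto_pow_atTop_nhds_zero_of_norm_lt_one hq
    have hp1 : Tendsto (fun m : ℕ => q ^ (m + 1)) atTop (𝓝 0) :=
      (tendsto_add_atTop_iff_nat 1).2 hp
    have hp2 : Tendsto (fun m : ℕ => q ^ (2 * m + 1)) atTop (𝓝 0) :=
      hp.comp (tendsto_atTop_mono (fun m => by simp; omega) tendsto_id)
    have t1 := (tendsto_const_nhds (x := (1:ℂ))).sub (hp.const_mul b)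
    have t2 := ((tendsto_const_nhds (x := (1:ℂ))).sub (hp2.const_mul (a * b))).inv₀ (by simp)
    have t3 := (su.tendsto_atTop_zero.mul (t1.mul (hp1.mul t2))).const_mul (a * (1 - a * b * q))
    simpa using t3

lemma q2_tendsto (q : ℂ) (hq : ‖q‖ < 1) : Tendsto (fun k : ℕ => (q ^ 2) ^ k) atTop (𝓝 0) :=
  tendsto_pow_atTop_nhds_zero_of_norm_lt_one (sq_lt q hq)

lemma gauss_half (a b q : ℂ) (hab : ‖a * b‖ ≤ 1) (hq : ‖q‖ < 1) :
    ∑' n, TG a b q n = qPochInf (a * q) (q ^ 2) / qPochInf (a * b * q) (q ^ 2) *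
      ∑' n, TG 0 b q n := by
  have h1 : 0 < 1 - ‖q‖ := by linarith
  have hk : ∀ k : ℕ, ‖a * (q ^ 2) ^ k * b‖ ≤ 1 := by
    intro k
    rw [mul_right_comm, norm_mul]
    exact mul_le_one₀ hab (norm_nonneg _) (pow_bd1 _ (sq_lt q hq) k)
  have hq2 := q2_tendsto q hq
  have := iter (fun k n => TG (a * (q ^ 2) ^ k) b q n) (fun n => TG 0 b q n)
    (Bd ((1 + ‖a‖) * (1 + ‖b‖) * ((1 - ‖q‖)⁻¹ * (1 - ‖q‖)⁻¹)) ‖q‖)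
    (fun k => (1 - a * q * (q ^ 2) ^ k) / (1 - a * b * q * (q ^ 2) ^ k))
    (qPochInf (a * q) (q ^ 2) / qPochInf (a * b * q) (q ^ 2))
    (Bd_summ _ _ (by positivity) (norm_nonneg _) hq)
    (fun k n => TG_bd _ _ _ _ (by
      rw [norm_mul]
      exact mul_le_of_le_one_right (norm_nonneg _) (pow_bd1 _ (sq_lt q hq) k)) (hk k) hq n)
    (fun n => by
      unfold TG
      apply tendsto_finsetProd
      intro j _
      have c1 := (hq2.const_mul a).mul_const (q ^ j)
      have c2 := ((hq2.const_mul a).mul_const b).mul_const (q ^ (2 * j + 1))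
      have t1 := (tendsto_const_nhds (x := (1:ℂ))).sub c1
      have t2 := ((tendsto_const_nhds (x := (1:ℂ))).sub c2).inv₀ (by simp)
      have t3 := (((t1.mul_const (1 - b * q ^ j)).mul_const (q ^ (j + 1))).mul_const
        ((1 - q ^ (j + 1))⁻¹)).mul t2
      simpa using t3)
    (fun k => by
      rw [gauss_rec _ _ _ (hk k) (by have := hk (k + 1); rwa [pow_succ, ← mul_assoc] at this) hq]
      have e1 : a * (q ^ 2) ^ k * q ^ 2 = a * (q ^ 2) ^ (k + 1) := by ring
      have e2 : a * (q ^ 2) ^ k * q = a * q * (q ^ 2) ^ k := by ring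
      have e3 : a * (q ^ 2) ^ k * b * q = a * b * q * (q ^ 2) ^ k := by ring
      rw [e1, e2, e3])
    (by
      simp only [Finset.prod_div_distrib]
      apply (qp_tendsto (a * q) (q ^ 2) (sq_lt q hq)).div (qp_tendsto (a * b * q) _ (sq_lt q hq))
      apply qp_ne' _ _ (sq_lt q hq)
      have := ab_bd a b q hab hq 0
      simp only [zero_add, pow_one] at this
      linarith)
  simpa using this

lemma TG_comm (a b q : ℂ) : TG a b q = TG b a q := by
  ext n; unfold TG; congr 1; ext j; rw [mul_comm b a]; ring

lemma gauss (a b q : ℂ) (hab : ‖a * b‖ ≤ 1) (hq : ‖q‖ < 1) :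
    ∑' n, TG a b q n = qPochInf (a * q) (q ^ 2) / qPochInf (a * b * q) (q ^ 2) *
      (qPochInf (b * q) (q ^ 2) * qPochInf (-q) q) := by
  rw [gauss_half a b q hab hq, TG_comm 0 b, gauss_half b 0 q (by simp) hq]
  have : TG 0 0 q = TE q q := by
    ext n; unfold TG TE; congr 1; ext j; simp [pow_succ']
  rw [this, euler q q hq]
  have : qPochInf (b * 0 * q) (q ^ 2) = 1 := by simp [qPochInf]
  rw [this, div_one]

/-- Bailey term -/
noncomputable def TB (b d c q : ℂ) (n : ℕ) : ℂ :=
  ∏ j ∈ Finset.range n, ((1 - b * q ^ j) * (1 - d * q ^ j) * (c * q ^ j) *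
    (1 - c * q ^ j)⁻¹ * (1 - q ^ (2 * j + 1 + 1))⁻¹)

lemma TB_bd (b d c q : ℂ) (M : ℝ) (hc : ‖c‖ ≤ M) (hM : M < 1) (hq : ‖q‖ < 1) (n : ℕ) :
    ‖TB b d c q n‖ ≤ Bd ((1 + ‖b‖) * (1 + ‖d‖) * (1 * (1 - M)⁻¹ * (1 - ‖q‖)⁻¹)) ‖q‖ n := by
  apply prod_bd
  intro j
  have h1 : 0 < 1 - ‖q‖ := by linarith
  have h2 : 0 < 1 - M := by linarith
  have e1 := inv_bd _ ‖q‖ hq (pow_bd q hq (2 * j + 1))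
  have e2 := inv_bd (c * q ^ j) M hM (by
    rw [norm_mul]
    exact (mul_le_of_le_one_right (norm_nonneg _) (pow_bd1 q hq j)).trans hc)
  have e3 : ‖c * q ^ j‖ ≤ 1 * ‖q‖ ^ j := by
    rw [norm_mul, norm_pow]; gcongr; linarith
  have e4 := add_bd b q hq j
  have e5 := add_bd d q hq j
  rw [norm_mul, norm_mul, norm_mul, norm_mul]
  calc _ ≤ (1 + ‖b‖) * (1 + ‖d‖) * (1 * ‖q‖ ^ j) * (1 - M)⁻¹ * (1 - ‖q‖)⁻¹ := by
        gcongr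
    _ = _ := by ring

lemma TB_summ (b d c q : ℂ) (hc : ‖c‖ < 1) (hq : ‖q‖ < 1) : Summable (TB b d c q) := by
  have h1 : 0 < 1 - ‖q‖ := by linarith
  have h2 : 0 < 1 - ‖c‖ := by linarith
  exact Summable.of_norm_bounded (Bd_summ _ _ (by positivity) (norm_nonneg _) hq)
    (TB_bd b d c q _ le_rfl hc hq)

lemma c_ne (c q : ℂ) (hc : ‖c‖ < 1) (hq : ‖q‖ < 1) (n : ℕ) : 1 - c * q ^ n ≠ 0 := by
  apply one_sub_ne
  rw [norm_mul]
  exact (mul_le_of_le_one_right (norm_nonneg _) (pow_bd1 q hq n)).trans_lt hc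

lemma TB_shift (b d c q : ℂ) (hc : ‖c‖ < 1) (hq : ‖q‖ < 1) (n : ℕ) :
    TB b d (c * q ^ 2) q n * (1 - c * q ^ n) * (1 - c * q ^ (n + 1)) =
      (q ^ n) ^ 2 * (1 - c) * (1 - c * q) * TB b d c q n := by
  induction n with
  | zero => simp [TB]
  | succ n ih =>
    have e1 : TB b d (c * q ^ 2) q (n + 1) = TB b d (c * q ^ 2) q n * _ :=
      Finset.prod_range_succ _ _
    have e2 : TB b d c q (n + 1) = TB b d c q n * _ := Finset.prod_range_succ _ _
    have h1 := c_ne c q hc hq n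
    have h2 := c_ne c q hc hq (n + 1 + 1)
    have h3 := qn_ne q hq (2 * n + 1)
    rw [e1, e2]
    have e3 : c * q ^ 2 * q ^ n = c * q ^ (n + 1 + 1) := by ring
    rw [e3]
    have i1 := inv_mul_cancel₀ h1
    have i2 := inv_mul_cancel₀ h2
    generalize TB b d (c * q ^ 2) q n = t at *
    generalize TB b d c q n = u at *
    generalize (1 - c * q ^ n)⁻¹ = v1 at *
    generalize (1 - c * q ^ (n + 1 + 1))⁻¹ = v2 at *
    generalize (1 - q ^ (2 * n + 1 + 1))⁻¹ = v3 at *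
    linear_combination ((1 - b * q ^ n) * (1 - d * q ^ n) * c * q ^ n * q ^ 2 * v3) *
      (t * (1 - c * q ^ (n + 1)) * i2 - t * (1 - c * q ^ (n + 1)) * i1 + v1 * ih)

lemma bailey_rec (b d c q : ℂ) (hbd : b * d = q) (hc : ‖c‖ < 1) (hc' : ‖c * q ^ 2‖ < 1)
    (hq : ‖q‖ < 1) :
    ∑' n, TB b d c q n = ((1 - c * d) * (1 - c * b) / ((1 - c) * (1 - c * q))) *
      ∑' n, TB b d (c * q ^ 2) q n := by
  have h0 : 1 - c ≠ 0 := one_sub_ne c hc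
  have h0' : 1 - c * q ≠ 0 := by simpa using c_ne c q hc hq 1
  have s0 := TB_summ b d c q hc hq
  have s1 := s0.mul_left ((1 - c) * (1 - c * q))
  have s2 := (TB_summ b d (c * q ^ 2) q hc' hq).mul_left ((1 - c * d) * (1 - c * b))
  suffices h : ((1 - c) * (1 - c * q)) * ∑' n, TB b d c q n =
      ((1 - c * d) * (1 - c * b)) * ∑' n, TB b d (c * q ^ 2) q n by
    rw [div_mul_eq_mul_div, eq_div_iff (mul_ne_zero h0 h0')]; linear_combination h
  rw [← sub_eq_zero, ← tsum_mul_left, ← tsum_mul_left, ← s1.tsum_sub s2]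
  apply tele _ (fun n => -((1 - c) * (1 - c * q)) * (TB b d c q n *
    ((1 - (q ^ n) ^ 2) * (1 - c * q ^ n)⁻¹))) (s1.sub s2)
  · intro n
    have e1 := TB_shift b d c q hc hq n
    have e2 : TB b d c q (n + 1) = TB b d c q n * _ := Finset.prod_range_succ _ _
    have h1 := c_ne c q hc hq n
    have h2 := c_ne c q hc hq (n + 1)
    have h3 := qn_ne q hq (2 * n + 1)
    have e3 : TB b d (c * q ^ 2) q n = (q ^ n) ^ 2 * (1 - c) * (1 - c * q) * TB b d c q n *
        ((1 - c * q ^ n)⁻¹ * (1 - c * q ^ (n + 1))⁻¹) := by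
      rw [← e1]; field_simp
    rw [e3, e2]
    generalize TB b d c q n = u
    have p1 : q ^ (2 * n + 1 + 1) = q ^ 2 * (q ^ n) ^ 2 := by ring
    have p3 : q ^ (n + 1) = q * q ^ n := by ring
    rw [p1] at h3
    rw [p3] at h2
    simp only [p1, p3]
    clear e1 e2 e3 p1 p3 s0 s1 s2
    generalize q ^ n = Y at *
    generalize hD1 : 1 - c * Y = D1 at *
    generalize hD2 : 1 - c * (q * Y) = D2 at *
    generalize hD3 : 1 - q ^ 2 * Y ^ 2 = D3 at *
    have e : (q * Y) ^ 2 = 1 - D3 := by rw [← hD3]; ring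
    rw [e, sub_sub_cancel]
    field_simp
    subst hD1 hD2 hD3
    subst hbd
    ring
  · simp
  · have hp := tendsto_pow_atTop_nhds_zero_of_norm_lt_one hq
    have t1 := (tendsto_const_nhds (x := (1:ℂ))).sub (hp.pow 2)
    have t2 := ((tendsto_const_nhds (x := (1:ℂ))).sub (hp.const_mul c)).inv₀ (by simp)
    simpa using (s0.tendsto_atTop_zero.mul (t1.mul t2)).const_mul (-((1 - c) * (1 - c * q)))

lemma bailey (b d c q : ℂ) (hbd : b * d = q) (hc : ‖c‖ < 1) (hq : ‖q‖ < 1) :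
    ∑' n, TB b d c q n = qPochInf (c * d) (q ^ 2) * qPochInf (c * b) (q ^ 2) / qPochInf c q := by
  have h1 : 0 < 1 - ‖q‖ := by linarith
  have h2 : 0 < 1 - ‖c‖ := by linarith
  have hk' : ∀ k : ℕ, ‖c * (q ^ 2) ^ k‖ ≤ ‖c‖ := by
    intro k
    rw [norm_mul]
    exact mul_le_of_le_one_right (norm_nonneg _) (pow_bd1 _ (sq_lt q hq) k)
  have hk : ∀ k : ℕ, ‖c * (q ^ 2) ^ k‖ < 1 := fun k => (hk' k).trans_lt hc
  have hq2 := q2_tendsto q hq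
  have hcq : ‖c * q‖ < 1 := by
    rw [norm_mul]; exact mul_lt_one_of_nonneg_of_lt_one_left (norm_nonneg _) hc hq.le
  have := iter (fun k n => TB b d (c * (q ^ 2) ^ k) q n) (fun n => TB b d 0 q n)
    (Bd ((1 + ‖b‖) * (1 + ‖d‖) * (1 * (1 - ‖c‖)⁻¹ * (1 - ‖q‖)⁻¹)) ‖q‖)
    (fun k => (1 - c * d * (q ^ 2) ^ k) * (1 - c * b * (q ^ 2) ^ k) /
      ((1 - c * (q ^ 2) ^ k) * (1 - c * q * (q ^ 2) ^ k)))
    (qPochInf (c * d) (q ^ 2) * qPochInf (c * b) (q ^ 2) /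
      (qPochInf c (q ^ 2) * qPochInf (c * q) (q ^ 2)))
    (Bd_summ _ _ (by positivity) (norm_nonneg _) hq)
    (fun k n => TB_bd _ _ _ _ _ (hk' k) hc hq n)
    (fun n => by
      unfold TB
      apply tendsto_finsetProd
      intro j _
      have c1 := (hq2.const_mul c).mul_const (q ^ j)
      have t2 := ((tendsto_const_nhds (x := (1:ℂ))).sub c1).inv₀ (by simp)
      have t3 := ((c1.const_mul ((1 - b * q ^ j) * (1 - d * q ^ j))).mul t2).mul_const
        ((1 - q ^ (2 * j + 1 + 1))⁻¹)
      simpa using t3)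
    (fun k => by
      rw [bailey_rec _ _ _ _ hbd (hk k)
        (by have := hk (k + 1); rwa [pow_succ, ← mul_assoc] at this) hq]
      have e1 : c * (q ^ 2) ^ k * q ^ 2 = c * (q ^ 2) ^ (k + 1) := by ring
      have e2 : ∀ x, c * (q ^ 2) ^ k * x = c * x * (q ^ 2) ^ k := by intro x; ring
      rw [e1, e2 d, e2 b, e2 q])
    (by
      simp only [Finset.prod_div_distrib, Finset.prod_mul_distrib]
      apply Tendsto.div
      · exact (qp_tendsto _ _ (sq_lt q hq)).mul (qp_tendsto _ _ (sq_lt q hq))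
      · exact (qp_tendsto _ _ (sq_lt q hq)).mul (qp_tendsto _ _ (sq_lt q hq))
      · exact mul_ne_zero (qp_ne' _ _ (sq_lt q hq) hc) (qp_ne' _ _ (sq_lt q hq) hcq))
  simp only [pow_zero, mul_one] at this
  rw [this, qp_dup c q hq, tsum_eq_single 0]
  · simp [TB]
  · intro n hn
    obtain ⟨m, rfl⟩ := Nat.exists_eq_succ_of_ne_zero hn
    simp [TB]

lemma qPoch_succ (a q : ℂ) (n : ℕ) : qPoch a q (n + 1) = qPoch a q n * (1 - a * q ^ n) :=
  Finset.prod_range_succ _ _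

lemma qPoch_ne (q : ℂ) (hq : ‖q‖ < 1) (n : ℕ) : qPoch q q n ≠ 0 := by
  unfold qPoch
  rw [Finset.prod_ne_zero_iff]
  intro j _
  have := qn_ne q hq j
  rwa [pow_succ'] at this

lemma TE_eq (w q : ℂ) (n : ℕ) :
    TE (w * q) (q ^ 2) n = w ^ n * q ^ (n ^ 2) / qPoch (q ^ 2) (q ^ 2) n := by
  induction n with
  | zero => simp [TE, qPoch]
  | succ n ih =>
    have e : TE (w * q) (q ^ 2) (n + 1) = TE (w * q) (q ^ 2) n * _ := Finset.prod_range_succ _ _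
    rw [e, ih, qPoch_succ, ← pow_succ' (q ^ 2), div_eq_mul_inv, div_eq_mul_inv, mul_inv]
    ring

lemma shift (w q : ℂ) (hq0 : q ≠ 0) (hw : w ≠ 0) (hq : ‖q‖ < 1) (m : ℕ) :
    qPochInf (-(w * (q ^ (2 * m))⁻¹)) (q ^ 2) =
      w ^ m * (q ^ (m * (m + 1)))⁻¹ * qPoch (-(q ^ 2 / w)) (q ^ 2) m * qPochInf (-w) (q ^ 2) := by
  induction m with
  | zero => simp [qPoch]
  | succ m ih =>
    rw [qp_succ _ _ (sq_lt q hq)]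
    have e : -(w * (q ^ (2 * (m + 1)))⁻¹) * q ^ 2 = -(w * (q ^ (2 * m))⁻¹) := by
      field_simp
      ring
    rw [e, ih, qPoch_succ]
    have h1 : (q ^ ((m + 1) * (m + 1 + 1)))⁻¹ = (q ^ (m * (m + 1)))⁻¹ * (q ^ (2 * (m + 1)))⁻¹ := by
      rw [← mul_inv, ← pow_add]; congr 2; ring
    have h2 : (1 - -(q ^ 2 / w) * (q ^ 2) ^ m) = 1 + q ^ (2 * (m + 1)) / w := by ring
    rw [h1, h2]
    have h3 : q ^ (2 * (m + 1)) ≠ 0 := pow_ne_zero _ hq0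
    generalize q ^ (2 * (m + 1)) = Y at *
    field_simp
    ring

lemma TB_eq (b d q : ℂ) (hq : ‖q‖ < 1) (m : ℕ) :
    TB b d q (q ^ 2) m * qPoch (q ^ 2) (q ^ 2) (2 * m) =
      q ^ (m ^ 2) * qPoch b (q ^ 2) m * qPoch d (q ^ 2) m * qPoch (-q) (q ^ 2) m := by
  induction m with
  | zero => simp [TB, qPoch]
  | succ m ih =>
    have e : TB b d q (q ^ 2) (m + 1) = TB b d q (q ^ 2) m * _ := Finset.prod_range_succ _ _
    rw [e, show 2 * (m + 1) = 2 * m + 1 + 1 by ring, qPoch_succ, qPoch_succ, qPoch_succ, qPoch_succ,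
      qPoch_succ]
    have i1 := inv_mul_cancel₀ (c_ne q (q ^ 2) hq (sq_lt q hq) m)
    have i2 := inv_mul_cancel₀ (qn_ne (q ^ 2) (sq_lt q hq) (2 * m + 1))
    have e1 : q ^ 2 * (q ^ 2) ^ (2 * m) = (q * (q ^ 2) ^ m) ^ 2 := by ring
    have e2 : q ^ 2 * (q ^ 2) ^ (2 * m + 1) = (q ^ 2) ^ (2 * m + 1 + 1) := by ring
    have e3 : q ^ ((m + 1) ^ 2) = q ^ (m ^ 2) * (q * (q ^ 2) ^ m) := by ring
    rw [e1, e2, e3]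
    generalize (1 - q * (q ^ 2) ^ m)⁻¹ = v1 at *
    generalize (1 - (q ^ 2) ^ (2 * m + 1 + 1))⁻¹ = v2 at *
    generalize (q ^ 2) ^ (2 * m + 1 + 1) = D at *
    generalize hP : q ^ (m ^ 2) * qPoch b (q ^ 2) m * qPoch d (q ^ 2) m * qPoch (-q) (q ^ 2) m = P at *
    generalize (q ^ 2) ^ m = Y at *
    generalize TB b d q (q ^ 2) m = t at *
    generalize qPoch (q ^ 2) (q ^ 2) (2 * m) = p at *
    calc _ = (t * p) * (1 - b * Y) * (1 - d * Y) * (q * Y) * (1 + q * Y) * (v1 * (1 - q * Y)) *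
          (v2 * (1 - D)) := by ring
      _ = P * (1 - b * Y) * (1 - d * Y) * (q * Y) * (1 + q * Y) := by rw [ih, i1, i2]; ring
      _ = _ := by rw [← hP]; ring

lemma TG_eq (a b q : ℂ) (hab : a * b = (q ^ 2) ^ 2) (hq : ‖q‖ < 1) (m : ℕ) :
    TG a b (q ^ 2) m * qPoch (q ^ 2) (q ^ 2) (2 * m + 1) =
      (1 - q ^ 2) * q ^ (m * (m + 1)) * qPoch a (q ^ 2) m * qPoch b (q ^ 2) m *
        qPoch (-q ^ 2) (q ^ 2) m := by
  induction m with
  | zero => simp [TG, qPoch]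
  | succ m ih =>
    have e : TG a b (q ^ 2) (m + 1) = TG a b (q ^ 2) m * _ := Finset.prod_range_succ _ _
    rw [e, show 2 * (m + 1) + 1 = 2 * m + 1 + 1 + 1 by ring, qPoch_succ _ _ (2 * m + 1 + 1),
      qPoch_succ _ _ (2 * m + 1), qPoch_succ a, qPoch_succ b, qPoch_succ (-q ^ 2)]
    have i1 := inv_mul_cancel₀ (qn_ne (q ^ 2) (sq_lt q hq) m)
    have i2 := inv_mul_cancel₀ (qn_ne (q ^ 2) (sq_lt q hq) (2 * m + 1 + 1))
    have e0 : a * b * (q ^ 2) ^ (2 * m + 1) = (q ^ 2) ^ (2 * m + 1 + 1 + 1) := by rw [hab]; ring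
    have e1 : q ^ 2 * (q ^ 2) ^ (2 * m + 1) = ((q ^ 2) ^ (m + 1)) ^ 2 := by ring
    have e2 : q ^ 2 * (q ^ 2) ^ (2 * m + 1 + 1) = (q ^ 2) ^ (2 * m + 1 + 1 + 1) := by ring
    have e3 : q ^ ((m + 1) * (m + 1 + 1)) = q ^ (m * (m + 1)) * (q ^ 2) ^ (m + 1) := by ring
    have e4 : -q ^ 2 * (q ^ 2) ^ m = -(q ^ 2) ^ (m + 1) := by ring
    rw [e0, e1, e2, e3, e4]
    generalize (1 - (q ^ 2) ^ (m + 1))⁻¹ = v1 at *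
    generalize (1 - (q ^ 2) ^ (2 * m + 1 + 1 + 1))⁻¹ = v2 at *
    generalize (q ^ 2) ^ (2 * m + 1 + 1 + 1) = D at *
    generalize hP : (1 - q ^ 2) * q ^ (m * (m + 1)) * qPoch a (q ^ 2) m * qPoch b (q ^ 2) m *
        qPoch (-q ^ 2) (q ^ 2) m = P at *
    generalize (q ^ 2) ^ (m + 1) = Z at *
    generalize (q ^ 2) ^ m = Y at *
    generalize TG a b (q ^ 2) m = t at *
    generalize qPoch (q ^ 2) (q ^ 2) (2 * m + 1) = p at *
    calc _ = (t * p) * (1 - a * Y) * (1 - b * Y) * Z * (1 + Z) * (v1 * (1 - Z)) *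
          (v2 * (1 - D)) := by ring
      _ = P * (1 - a * Y) * (1 - b * Y) * Z * (1 + Z) := by rw [ih, i1, i2]; ring
      _ = _ := by rw [← hP]; ring

noncomputable def FF (q z : ℂ) (i j k l : ℕ) : ℂ :=
  z ^ (((i:ℤ) - (j:ℤ)) : ℤ) * q ^ (((i:ℤ)^2 + (j:ℤ)^2 + (k:ℤ)^2 + (l:ℤ)^2 - (i:ℤ)*(l:ℤ) - (j:ℤ)*(l:ℤ) - (k:ℤ)*(l:ℤ)) : ℤ) /
          (qPoch (q ^ 2) (q ^ 2) i * qPoch (q ^ 2) (q ^ 2) j * qPoch (q ^ 2) (q ^ 2) k * qPoch (q ^ 2) (q ^ 2) l)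

lemma FF_eq (q z : ℂ) (hq : q ≠ 0) (hz : z ≠ 0) (i j k l : ℕ) :
    FF q z i j k l = (q ^ (l ^ 2) / qPoch (q ^ 2) (q ^ 2) l) *
      (TE (z * (q ^ l)⁻¹ * q) (q ^ 2) i * (TE (z⁻¹ * (q ^ l)⁻¹ * q) (q ^ 2) j *
        TE ((q ^ l)⁻¹ * q) (q ^ 2) k)) := by
  rw [TE_eq, TE_eq, TE_eq, FF]
  have e1 : q ^ (((i:ℤ)^2 + (j:ℤ)^2 + (k:ℤ)^2 + (l:ℤ)^2 - (i:ℤ)*(l:ℤ) - (j:ℤ)*(l:ℤ) - (k:ℤ)*(l:ℤ)) : ℤ)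
      = q ^ (i ^ 2) * q ^ (j ^ 2) * q ^ (k ^ 2) * q ^ (l ^ 2) * ((q ^ l)⁻¹) ^ i * ((q ^ l)⁻¹) ^ j *
        ((q ^ l)⁻¹) ^ k := by
    rw [zpow_sub₀ hq, zpow_sub₀ hq, zpow_sub₀ hq, zpow_add₀ hq, zpow_add₀ hq, zpow_add₀ hq]
    norm_cast
    simp only [inv_pow, ← pow_mul, mul_comm l, div_eq_mul_inv]
  rw [e1, zpow_sub₀ hz, zpow_natCast, zpow_natCast, mul_pow, mul_pow, inv_pow z]
  generalize ((q ^ l)⁻¹) = y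
  simp only [div_eq_mul_inv, mul_inv]
  ring

lemma gs (w s : ℝ) (hw : 0 ≤ w) (hs : 0 ≤ s) (hs1 : s < 1) :
    Summable (fun n : ℕ => w ^ n * s ^ (n ^ 2)) := by
  have h := Bd_summ (w * s) (s ^ 2) (by positivity) (by positivity)
    (pow_lt_one₀ hs hs1 (by norm_num))
  convert h using 2 with n
  induction n with
  | zero => simp [Bd]
  | succ n ih =>
    have : Bd (w * s) (s ^ 2) (n + 1) = Bd (w * s) (s ^ 2) n * _ := Finset.prod_range_succ _ _
    rw [this, ← ih]; ring

lemma qPoch_inv_bd (q : ℂ) (hq : ‖q‖ < 1) (n : ℕ) :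
    ‖(qPoch q q n)⁻¹‖ ≤ ((1 - ‖q‖)⁻¹) ^ n := by
  induction n with
  | zero => simp [qPoch]
  | succ n ih =>
    have h1 : 0 < 1 - ‖q‖ := by linarith
    rw [qPoch_succ, mul_inv, norm_mul, pow_succ]
    gcongr
    rw [← pow_succ']
    exact inv_bd _ _ hq (pow_bd q hq n)

lemma FF_summ (q z : ℂ) (h0 : 0 < ‖q‖) (hq : ‖q‖ < 1) (hz : z ≠ 0) :
    Summable (fun p : ℕ × ℕ × ℕ × ℕ => FF q z p.1 p.2.1 p.2.2.1 p.2.2.2) := by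
  obtain ⟨s, hs0, hs⟩ : ∃ s : ℝ, 0 ≤ s ∧ s ^ 8 = ‖q‖ :=
    ⟨‖q‖ ^ ((8:ℕ):ℝ)⁻¹, by positivity, Real.rpow_inv_natCast_pow h0.le (by norm_num)⟩
  have hs1 : s < 1 := by
    by_contra h
    have := one_le_pow₀ (not_lt.mp h) (n := 8)
    linarith
  have hsp : 0 < s := by
    rcases hs0.lt_or_eq with h | h
    · exact h
    · rw [← h] at hs; norm_num at hs; simp [← hs] at h0
  set K := (1 - ‖q ^ 2‖)⁻¹ with hK
  have hK0 : 0 < K := by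
    have := sq_lt q hq
    rw [hK, inv_pos]; linarith
  have g1 := gs (‖z‖ * K) s (by positivity) hs0 hs1
  have g2 := gs (‖z⁻¹‖ * K) s (by positivity) hs0 hs1
  have g3 := gs K s hK0.le hs0 hs1
  have n3 : ∀ (w : ℝ), 0 ≤ w → 0 ≤ (fun n : ℕ => w ^ n * s ^ (n ^ 2)) := fun w hw n => by
    simp only [Pi.zero_apply]; positivity
  have S1 := g3.mul_of_nonneg g3 (n3 _ hK0.le) (n3 _ hK0.le)
  have S2 := g2.mul_of_nonneg S1 (n3 _ (by positivity)) (fun p => by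
    simp only [Pi.zero_apply]; positivity)
  have S3 := g1.mul_of_nonneg S2 (n3 _ (by positivity)) (fun p => by
    simp only [Pi.zero_apply]; positivity)
  refine Summable.of_norm_bounded S3 ?_
  rintro ⟨i, j, k, l⟩
  simp only [FF]
  have b := qPoch_inv_bd (q ^ 2) (sq_lt q hq)
  rw [← hK] at b
  simp only [div_eq_mul_inv, mul_inv, norm_mul, norm_zpow]
  have e1 : ‖z‖ ^ ((i:ℤ) - (j:ℤ)) = ‖z‖ ^ i * ‖z⁻¹‖ ^ j := by
    rw [zpow_sub₀ (by simpa using hz), zpow_natCast, zpow_natCast, norm_inv, inv_pow,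
      div_eq_mul_inv]
  have e2 : ‖q‖ ^ (((i:ℤ)^2 + (j:ℤ)^2 + (k:ℤ)^2 + (l:ℤ)^2 - (i:ℤ)*(l:ℤ) - (j:ℤ)*(l:ℤ) - (k:ℤ)*(l:ℤ)) : ℤ)
      ≤ s ^ (i ^ 2) * s ^ (j ^ 2) * s ^ (k ^ 2) * s ^ (l ^ 2) := by
    rw [← hs, ← pow_add, ← pow_add, ← pow_add, ← zpow_natCast s 8, ← zpow_mul, ← zpow_natCast s]
    apply zpow_le_zpow_right_of_le_one₀ hsp hs1.le
    push_cast
    nlinarith [sq_nonneg (7 * (i:ℤ) - 4 * l), sq_nonneg (7 * (j:ℤ) - 4 * l),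
      sq_nonneg (7 * (k:ℤ) - 4 * l), sq_nonneg (l:ℤ)]
  rw [e1]
  calc _ ≤ ‖z‖ ^ i * ‖z⁻¹‖ ^ j * (s ^ (i ^ 2) * s ^ (j ^ 2) * s ^ (k ^ 2) * s ^ (l ^ 2)) *
        (K ^ i * K ^ j * K ^ k * K ^ l) := by
        gcongr
        · exact b i
        · exact b j
        · exact b k
        · exact b l
    _ = _ := by
      simp only [mul_pow]; ring

noncomputable def HH (q z : ℂ) (l : ℕ) : ℂ := (q ^ (l ^ 2) / qPoch (q ^ 2) (q ^ 2) l) *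
      (qPochInf (-(z * (q ^ l)⁻¹ * q)) (q ^ 2) * (qPochInf (-(z⁻¹ * (q ^ l)⁻¹ * q)) (q ^ 2) *
        qPochInf (-((q ^ l)⁻¹ * q)) (q ^ 2)))

def ee : ℕ × (ℕ × ℕ × ℕ) ≃ ℕ × ℕ × ℕ × ℕ where
  toFun p := (p.2.1, p.2.2.1, p.2.2.2, p.1)
  invFun p := (p.2.2.2, p.1, p.2.1, p.2.2.1)
  left_inv _ := rfl
  right_inv _ := rfl

lemma FF_sum (q z : ℂ) (h0 : 0 < ‖q‖) (hq : ‖q‖ < 1) (hz : z ≠ 0) :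
    Summable (HH q z) ∧
    ∑' p : ℕ × ℕ × ℕ × ℕ, FF q z p.1 p.2.1 p.2.2.1 p.2.2.2 = ∑' l, HH q z l := by
  have hq0 : q ≠ 0 := by simpa using h0
  have S := ee.summable_iff.2 (FF_summ q z h0 hq hz)
  have key : ∀ l, ∑' t : ℕ × ℕ × ℕ, FF q z t.1 t.2.1 t.2.2 l = HH q z l := by
    intro l
    simp only [FF_eq q z hq0 hz, HH]
    rw [tsum_mul_left]
    have s1 := (TE_summ (z * (q ^ l)⁻¹ * q) (q ^ 2) (sq_lt q hq)).norm
    have s2 := (TE_summ (z⁻¹ * (q ^ l)⁻¹ * q) (q ^ 2) (sq_lt q hq)).norm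
    have s3 := (TE_summ ((q ^ l)⁻¹ * q) (q ^ 2) (sq_lt q hq)).norm
    rw [← euler _ _ (sq_lt q hq), ← euler _ _ (sq_lt q hq), ← euler _ _ (sq_lt q hq),
      tsum_mul_tsum_of_summable_norm s2 s3,
      tsum_mul_tsum_of_summable_norm s1 (summable_mul_of_summable_norm s2 s3).norm]
  constructor
  · have := S.prod
    simp only [Function.comp_def, ee, Equiv.coe_fn_mk] at this
    simpa only [key] using this
  · rw [← ee.tsum_eq]
    have := S.tsum_prod
    simp only [Function.comp_def, ee, Equiv.coe_fn_mk] at this ⊢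
    rw [this]
    simp only [key]

lemma HH_even (q z : ℂ) (h0 : 0 < ‖q‖) (hq : ‖q‖ < 1) (hz : z ≠ 0) (m : ℕ) :
    HH q z (2 * m) = (qPochInf (-q * z) (q ^ 2) * qPochInf (-q / z) (q ^ 2) * qPochInf (-q) (q ^ 2)) *
      TB (-q / z) (-q * z) q (q ^ 2) m := by
  have hq0 : q ≠ 0 := by simpa using h0
  have hP := qPoch_ne (q ^ 2) (sq_lt q hq) (2 * m)
  have e := TB_eq (-q / z) (-q * z) q hq m
  rw [← eq_div_iff hP] at e
  have a1 : z * (q ^ (2 * m))⁻¹ * q = (z * q) * (q ^ (2 * m))⁻¹ := by ring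
  have a2 : z⁻¹ * (q ^ (2 * m))⁻¹ * q = (z⁻¹ * q) * (q ^ (2 * m))⁻¹ := by ring
  have a3 : (q ^ (2 * m))⁻¹ * q = q * (q ^ (2 * m))⁻¹ := by ring
  have b1 : -(q ^ 2 / (z * q)) = -q / z := by field_simp
  have b2 : -(q ^ 2 / (z⁻¹ * q)) = -q * z := by field_simp
  have b3 : -(q ^ 2 / q) = -q := by field_simp
  have c1 : -(z * q) = -q * z := by ring
  have c2 : -(z⁻¹ * q) = -q / z := by ring
  rw [HH, a1, a2, a3, shift (z * q) q hq0 (by positivity) hq, shift (z⁻¹ * q) q hq0 (by positivity) hq,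
    shift q q hq0 hq0 hq, e, b1, b2, b3, c1, c2, mul_pow z q, mul_pow z⁻¹ q, inv_pow]
  have p1 : q ^ ((2 * m) ^ 2) = q ^ (m ^ 2) * ((q ^ (m * (m + 1))) ^ 3 * ((q ^ m) ^ 3)⁻¹) := by
    field_simp
    ring
  rw [p1]
  have n1 : q ^ (m * (m + 1)) ≠ 0 := by positivity
  have n2 : q ^ m ≠ 0 := by positivity
  have n3 : z ^ m ≠ 0 := by positivity
  generalize q ^ (m * (m + 1)) = x1 at *
  generalize q ^ m = x2 at *
  generalize z ^ m = x3 at *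
  field_simp

lemma HH_odd (q z : ℂ) (h0 : 0 < ‖q‖) (hq : ‖q‖ < 1) (hz : z ≠ 0) (m : ℕ) :
    HH q z (2 * m + 1) = (q / (1 - q ^ 2) *
      (qPochInf (-z) (q ^ 2) * qPochInf (-1 / z) (q ^ 2) * qPochInf (-1) (q ^ 2))) *
      TG (-q ^ 2 / z) (-q ^ 2 * z) (q ^ 2) m := by
  have hq0 : q ≠ 0 := by simpa using h0
  have hP := qPoch_ne (q ^ 2) (sq_lt q hq) (2 * m + 1)
  have hQ := one_sub_ne _ (sq_lt q hq)
  have e := TG_eq (-q ^ 2 / z) (-q ^ 2 * z) q (by field_simp) hq m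
  rw [← eq_div_iff hP] at e
  have a0 : (q ^ (2 * m + 1))⁻¹ * q = 1 * (q ^ (2 * m))⁻¹ := by field_simp; ring
  have a1 : z * (q ^ (2 * m + 1))⁻¹ * q = z * (q ^ (2 * m))⁻¹ := by rw [mul_assoc, a0, one_mul]
  have a2 : z⁻¹ * (q ^ (2 * m + 1))⁻¹ * q = z⁻¹ * (q ^ (2 * m))⁻¹ := by rw [mul_assoc, a0, one_mul]
  have b1 : -(q ^ 2 / z) = -q ^ 2 / z := by ring
  have b2 : -(q ^ 2 / z⁻¹) = -q ^ 2 * z := by field_simp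
  have b3 : -(q ^ 2 / 1) = -q ^ 2 := by ring
  have c2 : -z⁻¹ = -1 / z := by ring
  rw [HH, a1, a2, a0, shift z q hq0 hz hq, shift (z⁻¹) q hq0 (by positivity) hq,
    shift 1 q hq0 one_ne_zero hq, e, b1, b2, b3, c2, inv_pow, one_pow]
  have p1 : q ^ ((2 * m + 1) ^ 2) = q * (q ^ (m * (m + 1))) ^ 4 := by
    ring
  rw [p1]
  have n1 : q ^ (m * (m + 1)) ≠ 0 := by positivity
  have n3 : z ^ m ≠ 0 := by positivity
  generalize q ^ (m * (m + 1)) = x1 at *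
  generalize z ^ m = x3 at *
  field_simp

theorem stmt_0 (q : ℂ) (h0 : 0 < ‖q‖) (h1 : ‖q‖ < 1) (z : ℂ) (hz : z ≠ 0) :
    (∑' p : ℕ × ℕ × ℕ × ℕ,
      (fun (i j k l : ℕ) =>
        z ^ (((i:ℤ) - (j:ℤ)) : ℤ) * q ^ (((i:ℤ)^2 + (j:ℤ)^2 + (k:ℤ)^2 + (l:ℤ)^2 - (i:ℤ)*(l:ℤ) - (j:ℤ)*(l:ℤ) - (k:ℤ)*(l:ℤ)) : ℤ) /
          (qPoch (q ^ 2) (q ^ 2) i * qPoch (q ^ 2) (q ^ 2) j * qPoch (q ^ 2) (q ^ 2) k * qPoch (q ^ 2) (q ^ 2) l))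
        p.1 p.2.1 p.2.2.1 p.2.2.2)
    = (J q 2)^3 * (qPochInf (-q/z) (q^2) * qPochInf (-q*z) (q^2)) *
        (qPochInf (-q^2*z) (q^4) * qPochInf (-q^2/z) (q^4)) / ((J q 1)^2 * J q 4)
      + 2 * q * (J q 4)^3 * (qPochInf (-1/z) (q^2) * qPochInf (-q^2*z) (q^2)) *
        (qPochInf (-z) (q^4) * qPochInf (-q^4/z) (q^4)) / (J q 2)^3 := by
  have hq0 : q ≠ 0 := by simpa using h0
  have hq2 := sq_lt q h1
  have hq4 : ‖q ^ 4‖ < 1 := by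
    have := sq_lt _ hq2; rwa [← pow_mul] at this
  obtain ⟨S, E⟩ := FF_sum q z h0 h1 hz
  have Se : Summable (fun m => HH q z (2 * m)) :=
    S.comp_injective (fun a b h => by simpa using h)
  have So : Summable (fun m => HH q z (2 * m + 1)) :=
    S.comp_injective (fun a b h => by simpa using h)
  change (∑' p : ℕ × ℕ × ℕ × ℕ, FF q z p.1 p.2.1 p.2.2.1 p.2.2.2) = _
  have q22 : (q ^ 2) ^ 2 = q ^ 4 := by ring
  have hab : -q ^ 2 / z * (-q ^ 2 * z) = q ^ 4 := by field_simp
  rw [E, ← tsum_even_add_odd Se So]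
  simp only [HH_even q z h0 h1 hz, HH_odd q z h0 h1 hz]
  rw [tsum_mul_left, tsum_mul_left, bailey (-q / z) (-q * z) q (q ^ 2) (by field_simp) h1 hq2,
    gauss (-q ^ 2 / z) (-q ^ 2 * z) (q ^ 2) (by rw [hab]; exact hq4.le) hq2, hab, q22]
  -- product identities
  have hJ1 : J q 1 ≠ 0 := qp_ne' _ _ (by simpa using h1) (by simpa using h1)
  have hJ2 : J q 2 ≠ 0 := qp_ne' _ _ hq2 hq2
  have hJ4 : J q 4 ≠ 0 := qp_ne' _ _ hq4 hq4
  have i1 : J q 1 = qPochInf q (q ^ 2) * J q 2 := by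
    have := qp_dup q q h1
    simp only [J, pow_one]
    rw [this]; congr 2; ring
  have i2 : J q 2 = qPochInf (q ^ 2) (q ^ 4) * J q 4 := by
    have := qp_dup (q ^ 2) (q ^ 2) hq2
    simp only [J]
    rw [this, q22, ← pow_add]
  have i3 : qPochInf q (q ^ 2) * qPochInf (-q) (q ^ 2) = qPochInf (q ^ 2) (q ^ 4) := by
    rw [qp_neg q (q ^ 2) hq2, q22]
  have i4 : J q 2 * qPochInf (-q ^ 2) (q ^ 2) = J q 4 := by
    have := qp_neg (q ^ 2) (q ^ 2) hq2
    rwa [q22] at this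
  have i5 : qPochInf (q ^ 2) (q ^ 4) = (1 - q ^ 2) * qPochInf (q ^ 4 * q ^ 2) (q ^ 4) := by
    rw [qp_succ _ _ hq4]; congr 2; ring
  have i6 : qPochInf (-1) (q ^ 2) = 2 * qPochInf (-q ^ 2) (q ^ 2) := by
    rw [qp_succ _ _ hq2]; norm_num
  have i7 : qPochInf (-z) (q ^ 2) = (1 + z) * qPochInf (-q ^ 2 * z) (q ^ 2) := by
    rw [qp_succ _ _ hq2, sub_neg_eq_add]; congr 2; ring
  have i8 : qPochInf (-z) (q ^ 4) = (1 + z) * qPochInf (-q ^ 2 * z * q ^ 2) (q ^ 4) := by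
    rw [qp_succ _ _ hq4, sub_neg_eq_add]; congr 2; ring
  have j1 : q * (-q * z) = -q ^ 2 * z := by ring
  have j2 : q * (-q / z) = -q ^ 2 / z := by ring
  have j3 : -q ^ 2 / z * q ^ 2 = -q ^ 4 / z := by ring
  have hA : qPochInf q (q ^ 2) ≠ 0 := fun h => hJ1 (by rw [i1, h, zero_mul])
  have hB : qPochInf (q ^ 2) (q ^ 4) ≠ 0 := fun h => hJ2 (by rw [i2, h, zero_mul])
  have hQ := one_sub_ne _ hq2
  have hC : qPochInf (q ^ 4 * q ^ 2) (q ^ 4) ≠ 0 := fun h => hB (by rw [i5, h, mul_zero])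
  rw [j1, j2, j3, i6, i7, i8]
  clear hab q22
  congr 1
  · rw [i1, i2]
    rw [← i3] at hB ⊢
    have hD : qPochInf (-q) (q ^ 2) ≠ 0 := right_ne_zero_of_mul hB
    generalize qPochInf q (q ^ 2) = A at *
    generalize qPochInf (-q) (q ^ 2) = D at *
    generalize J q 4 = J4 at *
    field_simp
  · rw [← i4]
    have i9 : qPochInf (q ^ 4 * q ^ 2) (q ^ 4) * (1 - q ^ 2) * qPochInf (-q ^ 2) (q ^ 2) = 1 := by
      apply mul_right_cancel₀ hJ2
      rw [mul_assoc _ _ (J q 2), mul_comm _ (J q 2), i4, mul_comm _ (1 - q ^ 2), ← i5, ← i2,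
        one_mul]
    generalize qPochInf (q ^ 4 * q ^ 2) (q ^ 4) = C at *
    generalize qPochInf (-q ^ 2) (q ^ 2) = D at *
    generalize J q 2 = J2 at *
    generalize 1 - q ^ 2 = Q at *
    have hD : D ≠ 0 := right_ne_zero_of_mul (i9 ▸ one_ne_zero)
    have hc : C = (Q * D)⁻¹ := by
      apply eq_inv_of_mul_eq_one_left; rw [← i9]; ring
    rw [hc]
    field_simp
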